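/- For every x̃ ∈ ℝⁿ, the matrices g_Ω(x̃) converge, as Ω → 0 from the right, to the plane wave limit matrix h_PW(x̃) whose entries are (h_PW)₁₂ = (h_PW)₂₁ = 1, (h_PW)ᵢⱼ(x̃) = hᵢⱼ(x̃¹, 0, 0, …, 0) for 3 ≤ i, j ≤ n, and all other entries 0; i.e., the Penrose plane wave limit lim_{Ω→0⁺} g_Ω exists pointwise and equals h_PW. -/

import Mathlib

/-! The formula for `g_Ω(x̃)` makes sense for every real `Ω`, including `Ω = 0`, and depends
continuously on `Ω` because `h` and `Ω ↦ ψ_Ω(x̃)` are continuous (`continuous_gOm`). At `Ω = 0` the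
positive powers of `Ω` vanish and `ψ_0(x̃) = (x̃¹, 0, …, 0)`, so its value there is exactly
`h_PW(x̃)` (`gOm_zero`); the one-sided limit is this value. -/

open Matrix

noncomputable section

/- Points of ℝⁿ, with `n + 3` coordinates so that the dimension is at least 3:
index `0` is the lightlike coordinate `x̃¹`, index `1` is `x̃²`, and indices `≥ 2` are the
remaining coordinates. -/

/-- The Penrose scaling diffeomorphism
`ψ_Ω(x̃¹, x̃², x̃³, …) = (x̃¹, Ω²x̃², Ωx̃³, …)`. -/
def psi (n : ℕ) (Ω : ℝ) (x : Fin (n+3) → ℝ) : Fin (n+3) → ℝ := fun j =>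
  if (j : ℕ) = 0 then x j else if (j : ℕ) = 1 then Ω^2 * x j else Ω * x j

/-- The rescaled metric `g_Ω` of Penrose's construction: `(g_Ω)₁₂ = (g_Ω)₂₁ = 1`,
`(g_Ω)₂₂ = Ω²·h₂₂∘ψ_Ω`, `(g_Ω)₂ᵢ = (g_Ω)ᵢ₂ = Ω·h₂ᵢ∘ψ_Ω`, `(g_Ω)ᵢⱼ = hᵢⱼ∘ψ_Ω` for
`i, j ≥ 3`, and `(g_Ω)₁₁ = (g_Ω)₁ᵢ = (g_Ω)ᵢ₁ = 0`. -/
def gOm (n : ℕ) (h : (Fin (n+3) → ℝ) → Matrix (Fin (n+3)) (Fin (n+3)) ℝ)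
    (Ω : ℝ) (x : Fin (n+3) → ℝ) : Matrix (Fin (n+3)) (Fin (n+3)) ℝ :=
  Matrix.of fun i j =>
    if (i : ℕ) = 0 then (if (j : ℕ) = 1 then 1 else 0)
    else if (j : ℕ) = 0 then (if (i : ℕ) = 1 then 1 else 0)
    else if (i : ℕ) = 1 then
      (if (j : ℕ) = 1 then Ω^2 * h (psi n Ω x) i j else Ω * h (psi n Ω x) i j)
    else if (j : ℕ) = 1 then Ω * h (psi n Ω x) i j
    else h (psi n Ω x) i j

/-- The plane wave limit matrix `h_PW`: `(h_PW)₁₂ = (h_PW)₂₁ = 1`,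
`(h_PW)ᵢⱼ(x̃) = hᵢⱼ(x̃¹, 0, …, 0)` for `i, j ≥ 3`, and all other entries `0`. -/
def hPW (n : ℕ) (h : (Fin (n+3) → ℝ) → Matrix (Fin (n+3)) (Fin (n+3)) ℝ)
    (x : Fin (n+3) → ℝ) : Matrix (Fin (n+3)) (Fin (n+3)) ℝ :=
  Matrix.of fun i j =>
    if (i : ℕ) = 0 then (if (j : ℕ) = 1 then 1 else 0)
    else if (j : ℕ) = 0 then (if (i : ℕ) = 1 then 1 else 0)
    else if (i : ℕ) = 1 ∨ (j : ℕ) = 1 then 0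
    else h (fun k => if (k : ℕ) = 0 then x 0 else 0) i j

/-- At `Ω = 0` the scaling collapses every point onto the `x̃¹`-axis. -/
lemma psi_zero (n : ℕ) (x : Fin (n+3) → ℝ) :
    psi n 0 x = fun k : Fin (n+3) => if (k : ℕ) = 0 then x 0 else 0 := by
  funext k
  by_cases hk : (k : ℕ) = 0
  · obtain rfl : k = 0 := Fin.ext hk
    simp [psi]
  · simp [psi, hk]

lemma continuous_psi (n : ℕ) (x : Fin (n+3) → ℝ) :
    Continuous fun Ω : ℝ => psi n Ω x := by
  refine continuous_pi fun k => ?_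
  unfold psi
  split_ifs <;> fun_prop

lemma gOm_zero (n : ℕ) (h : (Fin (n+3) → ℝ) → Matrix (Fin (n+3)) (Fin (n+3)) ℝ)
    (x : Fin (n+3) → ℝ) : gOm n h 0 x = hPW n h x := by
  ext i j
  simp only [gOm, hPW, Matrix.of_apply, psi_zero]
  split_ifs <;> simp_all

lemma continuous_gOm (n : ℕ) (h : (Fin (n+3) → ℝ) → Matrix (Fin (n+3)) (Fin (n+3)) ℝ)
    (hcont : Continuous h) (x : Fin (n+3) → ℝ) :
    Continuous fun Ω : ℝ => gOm n h Ω x := by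
  refine continuous_matrix fun i j => ?_
  have hij : Continuous fun Ω : ℝ => h (psi n Ω x) i j :=
    (hcont.comp (continuous_psi n x)).matrix_elem i j
  simp only [gOm, Matrix.of_apply]
  split_ifs
  · exact continuous_const
  · exact continuous_const
  · exact continuous_const
  · exact continuous_const
  · exact (continuous_pow 2).mul hij
  · exact continuous_id.mul hij
  · exact continuous_id.mul hij
  · exact hij

/-- For every `x̃`, the matrices `g_Ω(x̃)` converge, as `Ω → 0⁺`, to the
plane wave limit matrix `h_PW(x̃)`: the Penrose plane wave limit `lim_{Ω→0⁺} g_Ω` exists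
pointwise and equals `h_PW`. -/
theorem stmt_19 (n : ℕ)
    (h : (Fin (n+3) → ℝ) → Matrix (Fin (n+3)) (Fin (n+3)) ℝ)
    (hcont : Continuous h) (hsym : ∀ x, (h x).IsSymm)
    (h11 : ∀ x, h x 0 0 = 0) (h12 : ∀ x, h x 0 1 = 1)
    (h1i : ∀ x, ∀ i : Fin (n+3), 2 ≤ (i : ℕ) → h x 0 i = 0) :
    ∀ x : Fin (n+3) → ℝ,
      Filter.Tendsto (fun Ω : ℝ => gOm n h Ω x)
        (nhdsWithin 0 (Set.Ioi 0)) (nhds (hPW n h x)) := by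
  intro x
  rw [← gOm_zero]
  exact (continuous_gOm n h hcont x).continuousWithinAt
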